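/- arXiv:2311.16609 — 4 statements merged into one kernel-verified Lean document; each statement's English description precedes it below -/
import Mathlib

section
/- Let x_1, …, x_n be pairwise distinct complex numbers, let ℓ ≥ n, and define the n × ℓ matrices V_0 with entries (V_0)_{k,t} = x_k^t for 0 ≤ t ≤ ℓ−1 and V_1 with entries (V_1)_{k,t} = x_k^{t+1} for 0 ≤ t ≤ ℓ−1. Let P be an invertible n × n complex matrix and set Z_0 = P V_0 and Z_1 = P V_1. Then the matrix Z_0 Z_0* is invertible (where * denotes conjugate transpose), and Z_1 Z_0* (Z_0 Z_0*)^{-1} = P D P^{-1}, where D is the n × n diagonal matrix with diagonal entries x_1, …, x_n. -/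
open Matrix

/-- ESPRIT identity: with `V₀ k t = x k ^ t`, `V₁ k t = x k ^ (t+1)`
(`n × ℓ` matrices, `ℓ ≥ n`, the `x k` pairwise distinct), `P` invertible and
`Z₀ = P V₀`, `Z₁ = P V₁`, the matrix `Z₀ Z₀ᴴ` is invertible and
`Z₁ Z₀ᴴ (Z₀ Z₀ᴴ)⁻¹ = P (diagonal x) P⁻¹`. -/
theorem esprit_identity (n ℓ : ℕ) (hℓ : ℓ ≥ n)
    (x : Fin n → ℂ) (hdist : Function.Injective x)
    (P : Matrix (Fin n) (Fin n) ℂ) (hP : IsUnit P)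
    (V₀ V₁ Z₀ Z₁ : Matrix (Fin n) (Fin ℓ) ℂ)
    (hV₀ : V₀ = Matrix.of fun (k : Fin n) (t : Fin ℓ) => (x k) ^ (t : ℕ))
    (hV₁ : V₁ = Matrix.of fun (k : Fin n) (t : Fin ℓ) => (x k) ^ ((t : ℕ) + 1))
    (hZ₀ : Z₀ = P * V₀) (hZ₁ : Z₁ = P * V₁) :
    IsUnit (Z₀ * Z₀ᴴ) ∧
      Z₁ * Z₀ᴴ * (Z₀ * Z₀ᴴ)⁻¹ = P * Matrix.diagonal x * P⁻¹ := by
  have hinj : Function.Injective V₀.vecMul := by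
    intro a b hab
    have hab' : a ᵥ* V₀ = b ᵥ* V₀ := hab
    rw [← sub_eq_zero]
    refine Matrix.eq_zero_of_forall_pow_sum_mul_pow_eq_zero hdist ?_
    intro i
    have h := congrFun hab' ⟨i, lt_of_lt_of_le i.2 hℓ⟩
    simp only [Matrix.vecMul, dotProduct, hV₀, Matrix.of_apply] at h
    simp only [Pi.sub_apply, sub_mul, Finset.sum_sub_distrib, h, sub_self]
  have hZinj : Function.Injective Z₀.vecMul := by
    intro a b hab
    have hab' : a ᵥ* Z₀ = b ᵥ* Z₀ := hab
    rw [hZ₀, ← Matrix.vecMul_vecMul, ← Matrix.vecMul_vecMul] at hab'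
    exact Matrix.vecMul_injective_iff_isUnit.mpr hP (hinj hab')
  have hU : IsUnit (Z₀ * Z₀ᴴ) := by
    open scoped ComplexOrder in
    exact (Matrix.PosDef.mul_conjTranspose_self Z₀ hZinj).isUnit
  refine ⟨hU, ?_⟩
  have hD : V₁ = Matrix.diagonal x * V₀ := by
    ext k t
    simp [hV₀, hV₁, Matrix.diagonal_mul, pow_succ']
  have hPd : IsUnit P.det := (Matrix.isUnit_iff_isUnit_det P).mp hP
  have hUd : IsUnit (Z₀ * Z₀ᴴ).det := (Matrix.isUnit_iff_isUnit_det _).mp hU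
  have hZ : Z₁ = P * Matrix.diagonal x * P⁻¹ * Z₀ := by
    rw [hZ₁, hD, hZ₀, Matrix.mul_assoc _ P⁻¹, Matrix.nonsing_inv_mul_cancel_left _ _ hPd,
      Matrix.mul_assoc]
  rw [hZ, Matrix.mul_assoc _ Z₀, Matrix.mul_nonsing_inv_cancel_right _ _ hUd]
end

section
/- Let x_1, …, x_n be pairwise distinct complex numbers, let ℓ ≥ n, and define the n × ℓ matrices V_0 with entries (V_0)_{k,t} = x_k^t for 0 ≤ t ≤ ℓ−1 and V_1 with entries (V_1)_{k,t} = x_k^{t+1} for 0 ≤ t ≤ ℓ−1. Let P be an invertible n × n complex matrix and set Z_0 = P V_0 and Z_1 = P V_1. Then the set of eigenvalues of the n × n matrix Z_1 Z_0* (Z_0 Z_0*)^{-1} is exactly {x_1, …, x_n}. -/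
open Matrix

/-- ESPRIT recovery: with `V₀ k t = x k ^ t`, `V₁ k t = x k ^ (t+1)`
(`n × ℓ` matrices, `ℓ ≥ n`, the `x k` pairwise distinct), `P` invertible and
`Z₀ = P V₀`, `Z₁ = P V₁`, the set of eigenvalues of `Z₁ Z₀ᴴ (Z₀ Z₀ᴴ)⁻¹` is
exactly `{x 1, …, x n}`. -/
theorem esprit_eigenvalues (n ℓ : ℕ) (hℓ : ℓ ≥ n)
    (x : Fin n → ℂ) (hdist : Function.Injective x)
    (P : Matrix (Fin n) (Fin n) ℂ) (hP : IsUnit P)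
    (V₀ V₁ Z₀ Z₁ : Matrix (Fin n) (Fin ℓ) ℂ)
    (hV₀ : V₀ = Matrix.of fun (k : Fin n) (t : Fin ℓ) => (x k) ^ (t : ℕ))
    (hV₁ : V₁ = Matrix.of fun (k : Fin n) (t : Fin ℓ) => (x k) ^ ((t : ℕ) + 1))
    (hZ₀ : Z₀ = P * V₀) (hZ₁ : Z₁ = P * V₁) :
    {lam : ℂ | ∃ v : Fin n → ℂ, v ≠ 0 ∧
        (Z₁ * Z₀ᴴ * (Z₀ * Z₀ᴴ)⁻¹).mulVec v = lam • v} = Set.range x := by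
  have hPd : IsUnit P.det := (Matrix.isUnit_iff_isUnit_det P).1 hP
  have hinjV : Function.Injective V₀.vecMul := by
    refine (injective_iff_map_eq_zero (Matrix.vecMulLinear V₀)).2 ?_
    intro v hv
    refine Matrix.eq_zero_of_forall_pow_sum_mul_pow_eq_zero hdist ?_
    intro i
    have h := congrFun hv (Fin.castLE hℓ i)
    simpa [Matrix.vecMul, dotProduct, hV₀] using h
  have hinj : Function.Injective Z₀.vecMul := by
    have hPi : Function.Injective P.vecMul := Matrix.vecMul_injective_iff_isUnit.2 hP
    intro a b hab
    apply hPi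
    apply hinjV
    simpa [hZ₀, Matrix.vecMul_vecMul] using hab
  have hG : IsUnit (Z₀ * Z₀ᴴ).det :=
    (Matrix.isUnit_iff_isUnit_det _).1
      (open ComplexOrder in (Matrix.PosDef.mul_conjTranspose_self Z₀ hinj).isUnit)
  have hV : V₁ = Matrix.diagonal x * V₀ := by
    ext k t
    simp [hV₀, hV₁, Matrix.diagonal_mul, pow_succ']
  have hM : Z₁ * Z₀ᴴ * (Z₀ * Z₀ᴴ)⁻¹ = P * Matrix.diagonal x * P⁻¹ := by
    have h1 : Z₁ = P * Matrix.diagonal x * P⁻¹ * Z₀ := by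
      rw [hZ₁, hZ₀, hV, Matrix.mul_assoc _ P⁻¹, Matrix.nonsing_inv_mul_cancel_left _ _ hPd,
        Matrix.mul_assoc]
    rw [h1, Matrix.mul_assoc _ Z₀, Matrix.mul_assoc, Matrix.mul_nonsing_inv _ hG, Matrix.mul_one]
  rw [hM]
  ext lam
  simp only [Set.mem_ofPred_eq, Set.mem_range]
  constructor
  · rintro ⟨v, hv, h⟩
    have h2 : Matrix.diagonal x *ᵥ (P⁻¹ *ᵥ v) = lam • (P⁻¹ *ᵥ v) := by
      have := congrArg (fun w => P⁻¹ *ᵥ w) h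
      simpa [Matrix.mulVec_smul, Matrix.mulVec_mulVec, Matrix.mul_assoc,
        Matrix.nonsing_inv_mul_cancel_left _ _ hPd] using this
    have hw : P⁻¹ *ᵥ v ≠ 0 := by
      intro h0
      apply hv
      have := congrArg (fun w => P *ᵥ w) h0
      simpa [Matrix.mulVec_mulVec, Matrix.mul_nonsing_inv _ hPd] using this
    obtain ⟨k, hk⟩ := Function.ne_iff.1 hw
    refine ⟨k, ?_⟩
    have h3 := congrFun h2 k
    rw [Matrix.mulVec_diagonal] at h3
    exact mul_right_cancel₀ hk h3
  · rintro ⟨k, rfl⟩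
    refine ⟨P *ᵥ Pi.single k 1, ?_, ?_⟩
    · intro h0
      have := congrArg (fun w => P⁻¹ *ᵥ w) h0
      simp only [Matrix.mulVec_mulVec, Matrix.nonsing_inv_mul _ hPd, Matrix.one_mulVec,
        Matrix.mulVec_zero] at this
      simpa using congrFun this k
    · rw [Matrix.mulVec_mulVec, Matrix.mul_assoc, Matrix.nonsing_inv_mul _ hPd, Matrix.mul_one,
        ← Matrix.mulVec_mulVec, ← Matrix.mulVec_smul]
      congr 1
      ext j
      rw [Matrix.mulVec_diagonal]
      by_cases hj : j = k
      · subst hj; simp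
      · simp [hj]
end

section
/- Let x_1, …, x_n be pairwise distinct complex numbers, ℓ a natural number with ℓ + 1 ≥ n, and V the n × (ℓ+1) matrix with entries V_{k,t} = x_k^t. Let G be an N × n complex matrix with linearly independent columns, D an invertible n × n diagonal matrix, and A = G D V. If A = B W, where B is an N × n matrix with linearly independent columns and W is an n × (ℓ+1) matrix, then there exists an invertible n × n matrix P such that W = P V. -/
open Matrix

theorem exists_left_inv_of_cols {N n : ℕ} (B : Matrix (Fin N) (Fin n) ℂ)
    (hB : LinearIndependent ℂ (fun k : Fin n => (fun i : Fin N => B i k))) :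
    ∃ L : Matrix (Fin n) (Fin N) ℂ, L * B = 1 := by
  have hinj : Function.Injective B.mulVec := Matrix.mulVec_injective_iff.2 hB
  have hker : LinearMap.ker (Matrix.toLin' B) = ⊥ := by
    rw [LinearMap.ker_eq_bot]
    exact hinj
  obtain ⟨g, hg⟩ := LinearMap.exists_leftInverse_of_injective _ hker
  refine ⟨LinearMap.toMatrix' g, ?_⟩
  have h := congrArg LinearMap.toMatrix' hg
  rw [LinearMap.toMatrix'_comp, LinearMap.toMatrix'_toLin', LinearMap.toMatrix'_id] at h
  exact h

/-- Let `V` be the `n × (ℓ+1)` Vandermonde matrix of pairwise distinct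
`x 1, …, x n` with `ℓ + 1 ≥ n`, `G` an `N × n` matrix with linearly independent
columns, `D` an invertible diagonal matrix, and `A = G D V`.  If `A = B W` with
`B` an `N × n` matrix with linearly independent columns, then `W = P V` for
some invertible `n × n` matrix `P`. -/
theorem factorization_vandermonde (N n ℓ : ℕ) (hℓ : ℓ + 1 ≥ n)
    (x : Fin n → ℂ) (hdist : Function.Injective x)
    (V : Matrix (Fin n) (Fin (ℓ + 1)) ℂ)
    (hV : V = Matrix.of fun (k : Fin n) (t : Fin (ℓ + 1)) => (x k) ^ (t : ℕ))
    (G : Matrix (Fin N) (Fin n) ℂ)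
    (hG : LinearIndependent ℂ (fun k : Fin n => (fun i : Fin N => G i k)))
    (d : Fin n → ℂ) (hd : ∀ k, d k ≠ 0)
    (A : Matrix (Fin N) (Fin (ℓ + 1)) ℂ)
    (hA : A = G * Matrix.diagonal d * V)
    (B : Matrix (Fin N) (Fin n) ℂ)
    (hB : LinearIndependent ℂ (fun k : Fin n => (fun i : Fin N => B i k)))
    (W : Matrix (Fin n) (Fin (ℓ + 1)) ℂ) (hW : A = B * W) :
    ∃ P : Matrix (Fin n) (Fin n) ℂ, IsUnit P ∧ W = P * V := by
  obtain ⟨L, hL⟩ := exists_left_inv_of_cols B hB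
  obtain ⟨K, hK⟩ := exists_left_inv_of_cols G hG
  have hR : ∃ R : Matrix (Fin (ℓ + 1)) (Fin n) ℂ, V * R = 1 := by
    let S : Matrix (Fin (ℓ + 1)) (Fin n) ℂ :=
      (1 : Matrix (Fin (ℓ + 1)) (Fin (ℓ + 1)) ℂ).submatrix id (Fin.castLE hℓ)
    have hS : V * S = Matrix.vandermonde x := by
      ext i j
      simp [S, Matrix.mul_apply, Matrix.one_apply, hV, Matrix.vandermonde_apply]
    have hdet : IsUnit (Matrix.vandermonde x).det :=
      isUnit_iff_ne_zero.2 (Matrix.det_vandermonde_ne_zero_iff.2 hdist)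
    refine ⟨S * (Matrix.vandermonde x)⁻¹, ?_⟩
    rw [← Matrix.mul_assoc, hS, Matrix.mul_nonsing_inv _ hdet]
  obtain ⟨R, hR⟩ := hR
  have hBW : B * W = G * Matrix.diagonal d * V := by rw [← hW, hA]
  have hBP : B * (W * R) = G * Matrix.diagonal d := by
    rw [← Matrix.mul_assoc, hBW, Matrix.mul_assoc _ V R, hR, Matrix.mul_one]
  refine ⟨W * R, ?_, ?_⟩
  · have h1 : (Matrix.diagonal (fun k => (d k)⁻¹) * K * B) * (W * R) = 1 := by
      rw [Matrix.mul_assoc, hBP, Matrix.mul_assoc, ← Matrix.mul_assoc K, hK, Matrix.one_mul,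
        Matrix.diagonal_mul_diagonal]
      simp [hd]
    exact IsUnit.of_mul_eq_one_right _ h1
  · have h2 : B * W = B * (W * R * V) := by
      rw [← Matrix.mul_assoc B, hBP, hBW]
    have h3 := congrArg (fun M => L * M) h2
    simpa only [← Matrix.mul_assoc, hL, Matrix.one_mul] using h3
end

section
/- Let M be an N × N complex matrix, x_1, …, x_n pairwise distinct complex numbers, and g_1, …, g_n linearly independent vectors in ℂ^N with M g_k = x_k g_k for each k. Let w_1, …, w_n be nonzero complex numbers, u = Σ_{k=1}^{n} w_k g_k, and ℓ ≥ n. Let A be the N × (ℓ+1) matrix whose t-th column is M^t u for t = 0, …, ℓ. Suppose A = B W, where B is an N × n matrix with linearly independent columns and W is an n × (ℓ+1) matrix. Let Z_0 be W with its last column removed and Z_1 be W with its first column removed. Then Z_0 Z_0* is invertible and the set of eigenvalues of Z_1 Z_0* (Z_0 Z_0*)^{-1} is exactly {x_1, …, x_n}. -/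
open Matrix

/-- Noiseless ESPRIT correctness driven by the eigenmatrix `M`.  With pairwise
distinct `x k`, linearly independent eigenvectors `g k` (`M g_k = x_k • g_k`),
nonzero weights, `u = ∑ k, w k • g k`, `ℓ ≥ n`, and `A` the `N × (ℓ+1)` matrix
with `t`-th column `M^t u`: for any factorization `A = B W` with `B` having
linearly independent columns, letting `Z₀` (resp. `Z₁`) be `W` with its last
(resp. first) column removed, the matrix `Z₀ Z₀ᴴ` is invertible and the set of
eigenvalues of `Z₁ Z₀ᴴ (Z₀ Z₀ᴴ)⁻¹` is exactly `{x 1, …, x n}`. -/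
theorem esprit_correctness (N n ℓ : ℕ) (hℓ : ℓ ≥ n)
    (M : Matrix (Fin N) (Fin N) ℂ)
    (x : Fin n → ℂ) (hdist : Function.Injective x)
    (g : Fin n → (Fin N → ℂ)) (hind : LinearIndependent ℂ g)
    (hg : ∀ k, M.mulVec (g k) = x k • g k)
    (w : Fin n → ℂ) (hw : ∀ k, w k ≠ 0)
    (u : Fin N → ℂ) (hu : u = ∑ k, w k • g k)
    (A : Matrix (Fin N) (Fin (ℓ + 1)) ℂ)
    (hA : A = Matrix.of fun (i : Fin N) (t : Fin (ℓ + 1)) =>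
      (M ^ (t : ℕ)).mulVec u i)
    (B : Matrix (Fin N) (Fin n) ℂ)
    (hB : LinearIndependent ℂ (fun k : Fin n => (fun i : Fin N => B i k)))
    (W : Matrix (Fin n) (Fin (ℓ + 1)) ℂ) (hW : A = B * W)
    (Z₀ Z₁ : Matrix (Fin n) (Fin ℓ) ℂ)
    (hZ₀ : Z₀ = Matrix.of fun (k : Fin n) (t : Fin ℓ) => W k t.castSucc)
    (hZ₁ : Z₁ = Matrix.of fun (k : Fin n) (t : Fin ℓ) => W k t.succ) :
    IsUnit (Z₀ * Z₀ᴴ) ∧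
      {lam : ℂ | ∃ v : Fin n → ℂ, v ≠ 0 ∧
        (Z₁ * Z₀ᴴ * (Z₀ * Z₀ᴴ)⁻¹).mulVec v = lam • v} = Set.range x := by
  classical
  have hpow : ∀ (t : ℕ) (k : Fin n), (M ^ t).mulVec (g k) = (x k) ^ t • g k := by
    intro t k
    induction t with
    | zero => simp
    | succ t ih =>
      rw [pow_succ, ← Matrix.mulVec_mulVec, hg, Matrix.mulVec_smul, ih, smul_smul, pow_succ,
        mul_comm]
  let G : Matrix (Fin N) (Fin n) ℂ := Matrix.of fun i k => w k * g k i
  let V : Matrix (Fin n) (Fin ℓ) ℂ := Matrix.of fun k t => x k ^ (t : ℕ)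
  let D : Matrix (Fin n) (Fin n) ℂ := Matrix.diagonal x
  have hAe : ∀ i t, A i t = ∑ k, w k * g k i * x k ^ (t : ℕ) := by
    intro i t
    rw [hA, Matrix.of_apply, hu, Matrix.mulVec_sum, Finset.sum_apply]
    refine Finset.sum_congr rfl fun k _ => ?_
    rw [Matrix.mulVec_smul, hpow]
    simp only [Pi.smul_apply, smul_eq_mul]
    ring
  have h0 : B * Z₀ = G * V := by
    ext i t
    have := hAe i t.castSucc
    rw [hW, Matrix.mul_apply] at this
    rw [Matrix.mul_apply, Matrix.mul_apply, hZ₀]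
    simpa [G, V] using this
  have h1 : B * Z₁ = G * D * V := by
    ext i t
    have := hAe i t.succ
    rw [hW, Matrix.mul_apply] at this
    rw [Matrix.mul_apply, Matrix.mul_apply, hZ₁]
    simp only [Matrix.of_apply, this, D, Matrix.mul_diagonal, G, V]
    refine Finset.sum_congr rfl fun k _ => ?_
    rw [Fin.val_succ, pow_succ]
    ring
  have hBinj : Function.Injective B.mulVec := Matrix.mulVec_injective_iff.2 hB
  have hGinj : ∀ v, G.mulVec v = 0 → v = 0 := by
    intro v hv
    have h2 : ∑ k, (w k * v k) • g k = 0 := by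
      rw [← hv]
      ext i
      simp only [Finset.sum_apply, Pi.smul_apply, smul_eq_mul, Matrix.mulVec, dotProduct, G,
        Matrix.of_apply]
      refine Finset.sum_congr rfl fun k _ => ?_
      ring
    have h3 := Fintype.linearIndependent_iff.1 hind _ h2
    ext k
    exact (mul_eq_zero.1 (h3 k)).resolve_left (hw k)
  obtain ⟨L, hL⟩ : ∃ L : Matrix (Fin n) (Fin N) ℂ, L * B = 1 := by
    obtain ⟨f, hf⟩ := LinearMap.exists_leftInverse_of_injective (Matrix.toLin' B)
      (LinearMap.ker_eq_bot.2 hBinj)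
    refine ⟨LinearMap.toMatrix' f, ?_⟩
    have h := congrArg LinearMap.toMatrix' hf
    rwa [LinearMap.toMatrix'_comp, LinearMap.toMatrix'_toLin', LinearMap.toMatrix'_id] at h
  obtain ⟨R, hR⟩ : ∃ R : Matrix (Fin ℓ) (Fin n) ℂ, V * R = 1 := by
    let S : Matrix (Fin ℓ) (Fin n) ℂ := Matrix.of fun t k => if t = Fin.castLE hℓ k then 1 else 0
    have hS : V * S = Matrix.vandermonde x := by
      ext i k
      simp [V, S, Matrix.mul_apply, Matrix.vandermonde]
    have hdet : IsUnit (Matrix.vandermonde x).det :=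
      isUnit_iff_ne_zero.2 (Matrix.det_vandermonde_ne_zero_iff.2 hdist)
    exact ⟨S * (Matrix.vandermonde x)⁻¹, by
      rw [← Matrix.mul_assoc, hS, Matrix.mul_nonsing_inv _ hdet]⟩
  obtain ⟨P, hP⟩ : ∃ P, P = L * G := ⟨_, rfl⟩
  have hZ0 : Z₀ = P * V := by
    rw [hP, Matrix.mul_assoc, ← h0, ← Matrix.mul_assoc, hL, Matrix.one_mul]
  have hZ1 : Z₁ = P * D * V := by
    rw [hP, Matrix.mul_assoc, Matrix.mul_assoc, ← Matrix.mul_assoc G, ← h1, ← Matrix.mul_assoc, hL,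
      Matrix.one_mul]
  have hGBP : G = B * P := by
    have : G * V * R = B * (P * V) * R := by rw [← h0, ← hZ0]
    rwa [Matrix.mul_assoc, hR, Matrix.mul_one, Matrix.mul_assoc, Matrix.mul_assoc, hR,
      Matrix.mul_one] at this
  have hPu : IsUnit P := by
    rw [← Matrix.mulVec_injective_iff_isUnit]
    refine (injective_iff_map_eq_zero P.mulVecLin).2 fun v hv => hGinj v ?_
    rw [Matrix.mulVecLin_apply] at hv
    rw [hGBP, ← Matrix.mulVec_mulVec, hv, Matrix.mulVec_zero]
  have hPd : IsUnit P.det := (Matrix.isUnit_iff_isUnit_det P).1 hPu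
  have hZR : Z₀ * (R * P⁻¹) = 1 := by
    rw [hZ0, Matrix.mul_assoc, ← Matrix.mul_assoc V, hR, Matrix.one_mul,
      Matrix.mul_nonsing_inv _ hPd]
  have hU : IsUnit (Z₀ * Z₀ᴴ) := by
    rw [← Matrix.mulVec_injective_iff_isUnit]
    refine (injective_iff_map_eq_zero (Z₀ * Z₀ᴴ).mulVecLin).2 fun v hv => ?_
    rw [Matrix.mulVecLin_apply] at hv
    replace hv : Z₀ᴴ.mulVec v = 0 := by
      open scoped ComplexOrder in
      exact (Matrix.self_mul_conjTranspose_mulVec_eq_zero Z₀ v).1 hv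
    have h5 : (R * P⁻¹)ᴴ * Z₀ᴴ = 1 := by
      rw [← Matrix.conjTranspose_mul, hZR, Matrix.conjTranspose_one]
    rw [← Matrix.one_mulVec v, ← h5, ← Matrix.mulVec_mulVec, hv, Matrix.mulVec_zero]
  refine ⟨hU, ?_⟩
  have hC : Z₁ * Z₀ᴴ * (Z₀ * Z₀ᴴ)⁻¹ = P * D * P⁻¹ := by
    have h6 : Z₁ = P * D * P⁻¹ * Z₀ := by
      rw [hZ0, Matrix.mul_assoc _ P⁻¹, ← Matrix.mul_assoc P⁻¹, Matrix.nonsing_inv_mul _ hPd,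
        Matrix.one_mul, hZ1]
    rw [h6, Matrix.mul_assoc _ Z₀, Matrix.mul_assoc _ (Z₀ * Z₀ᴴ),
      Matrix.mul_nonsing_inv _ ((Matrix.isUnit_iff_isUnit_det _).1 hU), Matrix.mul_one]
  rw [hC]
  ext lam
  simp only [Set.mem_ofPred_eq, Set.mem_range]
  constructor
  · rintro ⟨v, hv, he⟩
    have h7 : D.mulVec (P⁻¹.mulVec v) = lam • P⁻¹.mulVec v := by
      have := congrArg P⁻¹.mulVec he
      rwa [Matrix.mulVec_mulVec, Matrix.mulVec_smul, Matrix.mul_assoc, ← Matrix.mul_assoc P⁻¹,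
        Matrix.nonsing_inv_mul _ hPd, Matrix.one_mul, ← Matrix.mulVec_mulVec] at this
    have h8 : P⁻¹.mulVec v ≠ 0 := by
      intro h
      apply hv
      rw [← Matrix.one_mulVec v, ← Matrix.mul_nonsing_inv _ hPd, ← Matrix.mulVec_mulVec, h,
        Matrix.mulVec_zero]
    obtain ⟨k, hk⟩ := Function.ne_iff.1 h8
    refine ⟨k, ?_⟩
    have h9 := congrFun h7 k
    rw [Matrix.mulVec_diagonal, Pi.smul_apply, smul_eq_mul] at h9
    exact mul_right_cancel₀ hk h9
  · rintro ⟨k, rfl⟩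
    refine ⟨P.mulVec (Pi.single k 1), ?_, ?_⟩
    · intro h
      have h10 : (Pi.single k 1 : Fin n → ℂ) = 0 := by
        rw [← Matrix.one_mulVec (Pi.single k 1 : Fin n → ℂ), ← Matrix.nonsing_inv_mul _ hPd,
          ← Matrix.mulVec_mulVec, h, Matrix.mulVec_zero]
      simpa using congrFun h10 k
    · rw [Matrix.mulVec_mulVec, Matrix.mul_assoc, Matrix.nonsing_inv_mul _ hPd, Matrix.mul_one,
        ← Matrix.mulVec_mulVec, ← Matrix.mulVec_smul]
      congr 1
      ext j
      rw [Matrix.mulVec_diagonal, Pi.smul_apply, smul_eq_mul]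
      by_cases hj : j = k
      · subst hj; simp
      · simp [hj]
end
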